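/- Let k ≥ 100 be an integer and let Ω be a subinterval of [0,1) with μ(Ω) ≥ 2^{−2^k − k}. Then there exists an integer a ≥ 0 such that the interval [a·2^{−2^{k+1} − k}, (a+1)·2^{−2^{k+1} − k}) is contained in Ω and has empty intersection with H_{b,k}(Ω) for every integer b with 2 ≤ b ≤ k. -/

import Mathlib

open scoped Classical

/-- `F M N α₁ α₂ x = |#{j : M ≤ j < M+N, α₁ ≤ x_j < α₂} − (α₂ − α₁)·N|`. -/
noncomputable def F (M N : ℕ) (α₁ α₂ : ℝ) (x : ℕ → ℝ) : ℝ :=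
  |(((Finset.Ico M (M + N)).filter fun j => α₁ ≤ x j ∧ x j < α₂).card : ℝ) -
    (α₂ - α₁) * N|

/-- The sequence `({b^j x})_{j ≥ 0}` of fractional parts. -/
noncomputable def bseq (b : ℕ) (x : ℝ) : ℕ → ℝ := fun j => Int.fract ((b : ℝ) ^ j * x)

/-- `N_k^{(b)} = ⌈2^k · log 2 / log b⌉`. -/
noncomputable def Nkb (b k : ℕ) : ℕ := ⌈(2 : ℝ) ^ k * Real.log 2 / Real.log b⌉₊

/-- `n_k^{(b)} = ⌈log₂(N_{k+1}^{(b)} − N_k^{(b)} − 4k)⌉`. -/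
noncomputable def nkb (b k : ℕ) : ℕ :=
  ⌈Real.logb 2 ((Nkb b (k + 1) : ℝ) - Nkb b k - 4 * k)⌉₊

/-- `T_b(k) = ⌈n_k^{(b)} · log 2 / (2 log b)⌉`. -/
noncomputable def Tbk (b k : ℕ) : ℕ :=
  ⌈(nkb b k : ℝ) * Real.log 2 / (2 * Real.log b)⌉₊

/-- The exceptional set `H_{b,k}(A)`. -/
noncomputable def Hset (b k : ℕ) (A : Set ℝ) : Set ℝ :=
  ⋃ (h : ℕ) (_ : 1 ≤ h) (_ : h ≤ Tbk b k) (a : ℕ) (_ : a < b ^ h)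
    (ℓ : ℕ) (_ : nkb b k ≤ 2 * ℓ) (_ : ℓ ≤ nkb b k)
    (m : ℕ) (_ : Nkb b k + 4 * k + m * 2 ^ ℓ + 2 ^ (ℓ - 1) ≤ Nkb b (k + 1)),
    {x ∈ A | 46 * (2 : ℝ) ^ (((ℓ : ℝ) - 1) / 2) * (h : ℝ) ^ (-(3 / 2) : ℝ) *
        Real.sqrt ((nkb b k : ℝ) - ℓ + 1) <
      F (Nkb b k + 4 * k + m * 2 ^ ℓ) (2 ^ (ℓ - 1))
        ((a : ℝ) / (b : ℝ) ^ h) (((a : ℝ) + 1) / (b : ℝ) ^ h) (bseq b x)}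

/-!
`F` counts the occurrences of a block of `h` base-`b` digits in a window of `N` positions, and it is
constant on the `b`-adic intervals of length `b ^ -(M + N + h)`. Positions in the same residue class
modulo `h` read disjoint, hence independent, blocks; Jensen's inequality combines the `h` classes
into a bound for the exponential moments of the full count, and Markov's inequality turns it into a
Bernstein bound for the number of `b`-adic intervals with a large deviation.

With the exponent `(n - ℓ + 1) * (3 * h * log b + 10)`, where `n = nkb b k`, this bound transfers
to the dyadic intervals inside `Ω`: out of about `W = |Ω| * 2 ^ (2 ^ (k + 1) + k)` of them, at most
`8 * W * b ^ (-3 * h) * 1024 ^ (-(n - ℓ + 1))` meet the exceptional set of `(b, h, a, ℓ, m)`. There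
are at most `2 ^ (n - ℓ + 1)` values of `m` and `b ^ h` values of `a`, so the sum over all
parameters converges, to at most `W / 16`. Since `W ≥ 4` and at least `W - 2` dyadic intervals lie
inside `Ω`, one of them avoids every exceptional set.
-/

open Finset Real

section Digits

lemma sum_range_mul {M : Type*} [AddCommMonoid M] (f : ℕ → M) (m B : ℕ) :
    ∑ y ∈ range (m * B), f y = ∑ z ∈ range m, ∑ r ∈ range B, f (z * B + r) := by
  induction m with
  | zero => simp
  | succ m ih => rw [Nat.succ_mul, sum_range_add, ih, sum_range_succ]

lemma mul_add_div_of_lt {r B : ℕ} (z : ℕ) (hr : r < B) : (z * B + r) / B = z := by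
  rw [mul_comm, Nat.mul_add_div (by omega), Nat.div_eq_of_lt hr, add_zero]

lemma sum_prod_digits {R : Type*} [CommSemiring R] (B : ℕ) (g : ℕ → R) (C n : ℕ) :
    ∑ y ∈ range (C * B ^ n), ∏ q ∈ range n, g (y / B ^ q % B) =
      C * (∑ c ∈ range B, g c) ^ n := by
  induction n with
  | zero => simp
  | succ n ih =>
    rw [pow_succ, ← mul_assoc, sum_range_mul, pow_succ, ← mul_assoc, ← ih, sum_mul]
    refine sum_congr rfl fun z _ => ?_
    rw [mul_sum]
    refine sum_congr rfl fun r hr => ?_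
    have hr := mem_range.1 hr
    rw [prod_range_succ', pow_zero, Nat.div_one, Nat.mul_add_mod_self_right, Nat.mod_eq_of_lt hr]
    congr 1
    refine prod_congr rfl fun q _ => ?_
    rw [pow_succ', ← Nat.div_div_eq_div_mul, mul_add_div_of_lt z hr]

lemma sum_prod_blocks {R : Type*} [CommSemiring R] {b s h n L : ℕ} (hL : s + h * n ≤ L)
    (g : ℕ → R) :
    ∑ y ∈ range (b ^ L), ∏ q ∈ range n, g (y / b ^ (s + h * q) % b ^ h) =
      (b : R) ^ (L - h * n) * (∑ c ∈ range (b ^ h), g c) ^ n := by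
  obtain ⟨e, rfl⟩ := Nat.exists_eq_add_of_le hL
  have hpow : b ^ (s + h * n + e) = b ^ e * (b ^ h) ^ n * b ^ s := by rw [← pow_mul]; ring
  rw [hpow, sum_range_mul]
  calc ∑ z ∈ range (b ^ e * (b ^ h) ^ n), ∑ r ∈ range (b ^ s),
        ∏ q ∈ range n, g ((z * b ^ s + r) / b ^ (s + h * q) % b ^ h)
      = ∑ z ∈ range (b ^ e * (b ^ h) ^ n), ∑ _r ∈ range (b ^ s),
        ∏ q ∈ range n, g (z / (b ^ h) ^ q % b ^ h) := by
        refine sum_congr rfl fun z _ => sum_congr rfl fun r hr => prod_congr rfl fun q _ => ?_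
        rw [pow_add, ← Nat.div_div_eq_div_mul, pow_mul, mul_add_div_of_lt z (mem_range.1 hr)]
    _ = (b : R) ^ s * ((b : R) ^ e * (∑ c ∈ range (b ^ h), g c) ^ n) := by
        simp only [sum_const, card_range, nsmul_eq_mul, ← mul_sum, sum_prod_digits, Nat.cast_pow]
    _ = (b : R) ^ (s + h * n + e - h * n) * (∑ c ∈ range (b ^ h), g c) ^ n := by
        rw [show s + h * n + e - h * n = s + e by omega, pow_add, mul_assoc]

lemma mod_pow_div_pow_mod_pow {b s h L : ℕ} (hL : s + h ≤ L) (y : ℕ) :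
    y % b ^ L / b ^ s % b ^ h = y / b ^ s % b ^ h := by
  obtain ⟨d, rfl⟩ := Nat.exists_eq_add_of_le hL
  rw [add_assoc, pow_add, Nat.mod_mul_right_div_self, pow_add, Nat.mod_mul_right_mod]

lemma sum_range_eq_sum_residues {M : Type*} [AddCommMonoid M] (f : ℕ → M) {h : ℕ} (N : ℕ)
    (hh : 0 < h) :
    ∑ i ∈ range N, f i = ∑ r ∈ range h, ∑ q ∈ range ((N + h - 1 - r) / h), f (r + h * q) := by
  have lt_div_iff : ∀ {r}, r < h → ∀ q, q < (N + h - 1 - r) / h ↔ r + h * q < N := by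
    intro r hr q
    rw [Nat.lt_iff_add_one_le, Nat.le_div_iff_mul_le hh, add_one_mul, mul_comm q]
    omega
  rw [sum_sigma']
  refine sum_nbij' (fun i => ⟨i % h, i / h⟩) (fun x => x.1 + h * x.2) ?_ ?_ ?_ ?_ ?_
  · intro i hi
    have hr := Nat.mod_lt i hh
    rw [mem_sigma, mem_range, mem_range, lt_div_iff hr, Nat.mod_add_div]
    exact ⟨hr, mem_range.1 hi⟩
  · rintro ⟨r, q⟩ hx
    rw [mem_sigma, mem_range, mem_range] at hx
    exact mem_range.2 ((lt_div_iff hx.1 q).1 hx.2)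
  · intro i _
    exact Nat.mod_add_div i h
  · rintro ⟨r, q⟩ hx
    have hr : r < h := mem_range.1 (mem_sigma.1 hx).1
    simp only [Nat.add_mul_mod_self_left, Nat.mod_eq_of_lt hr, Nat.add_mul_div_left _ _ hh,
      Nat.div_eq_of_lt hr, zero_add]
  · intro i _
    rw [Nat.mod_add_div]

end Digits

section ExponentialMoments

/-- The indicator of the digit `a`, centred by its mean over a uniformly distributed digit
`c < B`. -/
noncomputable def centeredIndicator (B a c : ℕ) : ℝ := (if c = a then 1 else 0) - 1 / B

lemma sum_exp_mul_centeredIndicator_le {B a : ℕ} (ha : a < B) {θ : ℝ} (hθ : |θ| ≤ 1) :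
    ∑ c ∈ range B, exp (θ * centeredIndicator B a c) ≤ B * exp (θ ^ 2 / B) := by
  have hB : (0 : ℝ) < B := by exact_mod_cast (by omega : 0 < B)
  have hterm (c : ℕ) : exp (θ * centeredIndicator B a c) =
      exp (-(θ / B)) * (1 + if c = a then exp θ - 1 else 0) := by
    unfold centeredIndicator
    split_ifs
    · rw [add_sub_cancel, ← exp_add]; congr 1; ring
    · rw [add_zero, mul_one]; congr 1; ring
  have hexp : exp θ - 1 ≤ θ + θ ^ 2 := by linarith [(abs_le.1 (abs_exp_sub_one_sub_id_le hθ)).2]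
  calc ∑ c ∈ range B, exp (θ * centeredIndicator B a c)
      = exp (-(θ / B)) * (B + (exp θ - 1)) := by
        simp only [hterm, ← mul_sum, sum_add_distrib, sum_const, card_range, nsmul_eq_mul, mul_one,
          sum_ite_eq', mem_range, ha, if_true]
    _ = B * (exp (-(θ / B)) * ((exp θ - 1) / B + 1)) := by field_simp; ring
    _ ≤ B * (exp (-(θ / B)) * exp ((θ + θ ^ 2) / B)) := by
        gcongr
        exact le_trans (by gcongr) (add_one_le_exp _)
    _ = B * exp (θ ^ 2 / B) := by rw [← exp_add]; congr 2; ring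

lemma exp_sum_le_sum_exp_card_mul {ι : Type*} {s : Finset ι} (hs : s.Nonempty) (f : ι → ℝ) :
    exp (∑ i ∈ s, f i) ≤ (#s : ℝ)⁻¹ * ∑ i ∈ s, exp (#s * f i) := by
  have hcard : (#s : ℝ) ≠ 0 := by exact_mod_cast hs.card_pos.ne'
  have hjensen := convexOn_exp.map_sum_le (t := s) (w := fun _ => (#s : ℝ)⁻¹)
    (p := fun i => #s * f i) (fun _ _ => by positivity)
    (by rw [sum_const, nsmul_eq_mul, mul_inv_cancel₀ hcard]) (fun _ _ => Set.mem_univ _)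
  simpa only [smul_eq_mul, inv_mul_cancel_left₀ hcard, mul_sum] using hjensen

/-- The number of `1 ≤ i ≤ N` such that the `h` base-`b` digits of `y` at the positions
`i, …, i + h - 1` (counted from the least significant one) spell `a`, minus its mean over a
uniformly distributed `y`. -/
noncomputable def centeredBlockCount (b h a N y : ℕ) : ℝ :=
  ∑ i ∈ range N, centeredIndicator (b ^ h) a (y / b ^ (i + 1) % b ^ h)

lemma centeredBlockCount_mod (b h a N y : ℕ) :
    centeredBlockCount b h a N (y % b ^ (N + h)) = centeredBlockCount b h a N y := by
  refine sum_congr rfl fun i hi => ?_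
  have hi := mem_range.1 hi
  rw [mod_pow_div_pow_mod_pow (by omega)]

lemma sum_exp_mul_sum_disjoint_blocks_le {b s h n L a : ℕ} (ha : a < b ^ h)
    (hL : s + h * n ≤ L) {θ : ℝ} (hθ : |θ| ≤ 1) :
    ∑ y ∈ range (b ^ L),
        exp (θ * ∑ q ∈ range n, centeredIndicator (b ^ h) a (y / b ^ (s + h * q) % b ^ h)) ≤
      (b : ℝ) ^ L * exp (n * (θ ^ 2 / (b : ℝ) ^ h)) := by
  have hsingle : ∑ c ∈ range (b ^ h), exp (θ * centeredIndicator (b ^ h) a c) ≤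
      (b : ℝ) ^ h * exp (θ ^ 2 / (b : ℝ) ^ h) := by
    simpa only [Nat.cast_pow] using sum_exp_mul_centeredIndicator_le ha hθ
  simp only [mul_sum, exp_sum]
  rw [sum_prod_blocks hL fun c => exp (θ * centeredIndicator (b ^ h) a c)]
  calc (b : ℝ) ^ (L - h * n) * (∑ c ∈ range (b ^ h), exp (θ * centeredIndicator (b ^ h) a c)) ^ n
      ≤ (b : ℝ) ^ (L - h * n) * ((b : ℝ) ^ h * exp (θ ^ 2 / (b : ℝ) ^ h)) ^ n := by gcongr
    _ = (b : ℝ) ^ L * exp (n * (θ ^ 2 / (b : ℝ) ^ h)) := by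
        rw [mul_pow, ← pow_mul, ← mul_assoc, ← pow_add, Nat.sub_add_cancel (by omega),
          ← exp_nat_mul]

lemma sum_exp_mul_centeredBlockCount_le {b h a : ℕ} (N : ℕ) (hb : 0 < b) (hh : 0 < h)
    (ha : a < b ^ h) {lam : ℝ} (hlam : |lam| * h ≤ 1) :
    ∑ y ∈ range (b ^ (N + h)), exp (lam * centeredBlockCount b h a N y) ≤
      (b : ℝ) ^ (N + h) * exp (h * (N + h) / (b : ℝ) ^ h * lam ^ 2) := by
  set n : ℕ → ℕ := fun r => (N + h - 1 - r) / h
  set classSum : ℕ → ℕ → ℝ := fun y r =>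
    ∑ q ∈ range (n r), centeredIndicator (b ^ h) a (y / b ^ (r + 1 + h * q) % b ^ h)
  have hh' : (0 : ℝ) < h := by exact_mod_cast hh
  have hsplit (y : ℕ) : exp (lam * centeredBlockCount b h a N y) ≤
      (h : ℝ)⁻¹ * ∑ r ∈ range h, exp (h * lam * classSum y r) := by
    rw [centeredBlockCount, sum_range_eq_sum_residues _ N hh, mul_sum]
    simpa only [card_range, mul_assoc, classSum, add_right_comm] using
      exp_sum_le_sum_exp_card_mul (nonempty_range_iff.2 hh.ne') fun r => lam * classSum y r
  have hclass : ∀ r ∈ range h, ∑ y ∈ range (b ^ (N + h)), exp (h * lam * classSum y r) ≤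
      (b : ℝ) ^ (N + h) * exp (h * (N + h) / (b : ℝ) ^ h * lam ^ 2) := by
    intro r hr
    have hr := mem_range.1 hr
    have hn : h * n r ≤ N + h - 1 - r := Nat.mul_div_le _ _
    have hn' : (h : ℝ) * n r ≤ N + h := by exact_mod_cast (by omega : h * n r ≤ N + h)
    have hθ : |h * lam| ≤ 1 := by rwa [abs_mul, abs_of_pos hh', mul_comm]
    refine (sum_exp_mul_sum_disjoint_blocks_le ha (by omega) hθ).trans ?_
    refine mul_le_mul_of_nonneg_left (exp_le_exp.2 ?_) (by positivity)
    calc n r * ((h * lam) ^ 2 / (b : ℝ) ^ h)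
        = h * (h * n r) / (b : ℝ) ^ h * lam ^ 2 := by ring
      _ ≤ h * (N + h) / (b : ℝ) ^ h * lam ^ 2 := by gcongr
  calc ∑ y ∈ range (b ^ (N + h)), exp (lam * centeredBlockCount b h a N y)
      ≤ ∑ y ∈ range (b ^ (N + h)), (h : ℝ)⁻¹ * ∑ r ∈ range h, exp (h * lam * classSum y r) :=
        sum_le_sum fun y _ => hsplit y
    _ = (h : ℝ)⁻¹ * ∑ r ∈ range h, ∑ y ∈ range (b ^ (N + h)), exp (h * lam * classSum y r) := by
        rw [← mul_sum, sum_comm]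
    _ ≤ (h : ℝ)⁻¹ *
        (h * ((b : ℝ) ^ (N + h) * exp (h * (N + h) / (b : ℝ) ^ h * lam ^ 2))) := by
        gcongr
        simpa only [card_range, nsmul_eq_mul] using sum_le_card_nsmul _ _ _ hclass
    _ = (b : ℝ) ^ (N + h) * exp (h * (N + h) / (b : ℝ) ^ h * lam ^ 2) :=
        inv_mul_cancel_left₀ hh'.ne' _

lemma card_filter_lt_abs_le {ι : Type*} (s : Finset ι) (X : ι → ℝ) {lam t M : ℝ} (hlam : 0 ≤ lam)
    (hpos : ∑ i ∈ s, exp (lam * X i) ≤ M) (hneg : ∑ i ∈ s, exp (-lam * X i) ≤ M) :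
    (#{i ∈ s | t < |X i|} : ℝ) ≤ 2 * M * exp (-(lam * t)) := by
  have hmarkov (i : ι) : (if t < |X i| then (1 : ℝ) else 0) ≤
      exp (-(lam * t)) * (exp (lam * X i) + exp (-lam * X i)) := by
    split_ifs with hi
    · have habs : exp (lam * |X i|) ≤ exp (lam * X i) + exp (-lam * X i) := by
        rcases abs_choice (X i) with h | h <;> rw [h]
        · linarith [exp_pos (-lam * X i)]
        · rw [mul_neg, ← neg_mul]
          linarith [exp_pos (lam * X i)]
      calc (1 : ℝ) ≤ exp (-(lam * t)) * exp (lam * |X i|) := by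
            rw [← exp_add]
            exact one_le_exp (by linarith [mul_le_mul_of_nonneg_left hi.le hlam])
        _ ≤ exp (-(lam * t)) * (exp (lam * X i) + exp (-lam * X i)) := by gcongr
    · positivity
  calc (#{i ∈ s | t < |X i|} : ℝ) = ∑ i ∈ s, if t < |X i| then (1 : ℝ) else 0 := by
        rw [card_filter]; push_cast; rfl
    _ ≤ ∑ i ∈ s, exp (-(lam * t)) * (exp (lam * X i) + exp (-lam * X i)) :=
        sum_le_sum fun i _ => hmarkov i
    _ = exp (-(lam * t)) * (∑ i ∈ s, exp (lam * X i) + ∑ i ∈ s, exp (-lam * X i)) := by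
        rw [← mul_sum, sum_add_distrib]
    _ ≤ exp (-(lam * t)) * (M + M) := by gcongr
    _ = 2 * M * exp (-(lam * t)) := by ring

lemma exists_bernstein_parameter {V h t K : ℝ} (hV : 0 < V) (hh : 0 < h) (ht : 0 < t)
    (hgauss : 4 * V * K ≤ t ^ 2) (hlin : 2 * h * K ≤ t) :
    ∃ lam, 0 < lam ∧ lam * h ≤ 1 ∧ V * lam ^ 2 - lam * t ≤ -K := by
  rcases le_total (t * h) (2 * V) with hsmall | hlarge
  · refine ⟨t / (2 * V), by positivity, ?_, ?_⟩
    · rwa [div_mul_eq_mul_div, div_le_one (by positivity)]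
    · calc V * (t / (2 * V)) ^ 2 - t / (2 * V) * t = -(t ^ 2 / (4 * V)) := by field_simp; ring
        _ ≤ -K := by rw [neg_le_neg_iff, le_div_iff₀ (by positivity)]; linarith
  · refine ⟨1 / h, by positivity, by rw [one_div_mul_cancel hh.ne'], ?_⟩
    have hVh : V / h ≤ t / 2 := by rw [div_le_iff₀ hh]; linarith
    calc V * (1 / h) ^ 2 - 1 / h * t = (V / h - t) / h := by field_simp
      _ ≤ -K := by rw [div_le_iff₀ hh]; linarith

lemma card_lt_abs_centeredBlockCount_le {b h a N : ℕ} (hb : 0 < b) (hh : 0 < h) (ha : a < b ^ h)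
    {t K : ℝ} (ht : 0 < t) (hgauss : 4 * (h * (N + h) / (b : ℝ) ^ h) * K ≤ t ^ 2)
    (hlin : 2 * h * K ≤ t) :
    (#{y ∈ range (b ^ (N + h)) | t < |centeredBlockCount b h a N y|} : ℝ) ≤
      2 * (b : ℝ) ^ (N + h) * exp (-K) := by
  obtain ⟨lam, hlam, hlam_h, hexponent⟩ :=
    exists_bernstein_parameter (by positivity) (by positivity) ht hgauss hlin
  have hpos := sum_exp_mul_centeredBlockCount_le N hb hh ha (lam := lam) (by rwa [abs_of_pos hlam])
  have hneg := sum_exp_mul_centeredBlockCount_le N hb hh ha (lam := -lam)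
    (by rwa [abs_neg, abs_of_pos hlam])
  rw [neg_sq] at hneg
  refine (card_filter_lt_abs_le _ _ hlam.le hpos hneg).trans ?_
  rw [← mul_assoc, mul_assoc _ (exp _), ← exp_add]
  gcongr
  linarith

end ExponentialMoments

section GridCells

/-- The half-open cell with index `a` of the grid of mesh `δ` on the real line. -/
def gridCell (δ : ℝ) (a : ℕ) : Set ℝ := Set.Ico (a * δ) ((a + 1) * δ)

lemma mem_gridCell_iff {δ x : ℝ} {a : ℕ} (hδ : 0 < δ) :
    x ∈ gridCell δ a ↔ 0 ≤ x ∧ ⌊x / δ⌋₊ = a := by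
  have hbounds : x ∈ gridCell δ a ↔ a ≤ x / δ ∧ x / δ < a + 1 := by
    rw [gridCell, Set.mem_Ico, le_div_iff₀ hδ, div_lt_iff₀ hδ]
  rw [hbounds]
  refine ⟨fun hx => ?_, fun ⟨hx, ha⟩ => (Nat.floor_eq_iff (by positivity)).1 ha⟩
  have hxδ : 0 ≤ x / δ := (Nat.cast_nonneg a).trans hx.1
  exact ⟨by rwa [le_div_iff₀ hδ, zero_mul] at hxδ, (Nat.floor_eq_iff hxδ).2 hx⟩

lemma mem_gridCell_mul_div {δ x : ℝ} {y : ℕ} (B : ℕ) (hδ : 0 < δ) (hx : x ∈ gridCell (δ / B) y)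
    (hB : 0 < B) : x ∈ gridCell δ (y / B) := by
  rw [mem_gridCell_iff (by positivity)] at hx
  rw [mem_gridCell_iff hδ, ← hx.2, ← Nat.floor_div_natCast]
  refine ⟨hx.1, ?_⟩
  congr 1
  field_simp

lemma fract_mem_gridCell {B c : ℕ} {z : ℝ} (hB : 0 < B) (hz : z ∈ gridCell (B : ℝ)⁻¹ c) :
    Int.fract z ∈ gridCell (B : ℝ)⁻¹ (c % B) := by
  have hB' : (0 : ℝ) < B := by exact_mod_cast hB
  have hfloor := mem_gridCell_mul_div B one_pos (by rwa [one_div]) hB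
  rw [mem_gridCell_iff one_pos, div_one] at hfloor
  have hfract : z = Int.fract z + (c / B : ℕ) := by
    rw [← hfloor.2, natCast_floor_eq_intCast_floor hfloor.1, Int.fract_add_floor]
  have hmod : (c : ℝ) = (c % B : ℕ) + B * (c / B : ℕ) := by
    exact_mod_cast (Nat.mod_add_div c B).symm
  rw [hfract] at hz
  simp only [gridCell, Set.mem_Ico, ← div_eq_mul_inv, div_le_iff₀ hB', lt_div_iff₀ hB'] at hz ⊢
  constructor <;> linarith [hz.1, hz.2]

lemma fract_pow_mul_mem_iff {b j h s a y : ℕ} {x : ℝ} (hb : 0 < b)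
    (hx : x ∈ gridCell ((b : ℝ) ^ (j + h + s))⁻¹ y) :
    ((a : ℝ) / (b : ℝ) ^ h ≤ Int.fract ((b : ℝ) ^ j * x) ∧
      Int.fract ((b : ℝ) ^ j * x) < ((a : ℝ) + 1) / (b : ℝ) ^ h) ↔ y / b ^ s % b ^ h = a := by
  have hcoarse : x ∈ gridCell ((b : ℝ) ^ (j + h))⁻¹ (y / b ^ s) :=
    mem_gridCell_mul_div _ (by positivity) (by convert hx using 2; push_cast; field_simp; ring)
      (by positivity)
  have hscaled : (b : ℝ) ^ j * x ∈ gridCell ((b ^ h : ℕ) : ℝ)⁻¹ (y / b ^ s) := by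
    rw [mem_gridCell_iff (by positivity)] at hcoarse ⊢
    refine ⟨mul_nonneg (by positivity) hcoarse.1, ?_⟩
    rw [← hcoarse.2]
    congr 1
    push_cast
    field_simp
    ring
  have hdigit := fract_mem_gridCell (by positivity) hscaled
  have hcell (w : ℝ) : (a / (b : ℝ) ^ h ≤ w ∧ w < (a + 1) / (b : ℝ) ^ h) ↔
      w ∈ gridCell ((b ^ h : ℕ) : ℝ)⁻¹ a := by
    rw [gridCell, Set.mem_Ico, Nat.cast_pow, ← div_eq_mul_inv, ← div_eq_mul_inv]
  rw [mem_gridCell_iff (by positivity)] at hdigit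
  rw [hcell, mem_gridCell_iff (by positivity), hdigit.2]
  exact and_iff_right hdigit.1

lemma F_bseq_eq_of_mem_gridCell {b h M N a y : ℕ} {x : ℝ} (hb : 0 < b)
    (hx : x ∈ gridCell ((b : ℝ) ^ (M + N + h))⁻¹ y) :
    F M N ((a : ℝ) / (b : ℝ) ^ h) (((a : ℝ) + 1) / (b : ℝ) ^ h) (bseq b x) =
      |centeredBlockCount b h a N y| := by
  have hdigit : ∀ i ∈ range N, (a / (b : ℝ) ^ h ≤ bseq b x (M + i) ∧
      bseq b x (M + i) < (a + 1) / (b : ℝ) ^ h) ↔ y / b ^ (N - 1 - i + 1) % b ^ h = a := by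
    intro i hi
    have hi := mem_range.1 hi
    refine fract_pow_mul_mem_iff hb ?_
    rwa [show M + i + h + (N - 1 - i + 1) = M + N + h by omega]
  have hcount : (#{j ∈ Ico M (M + N) | a / (b : ℝ) ^ h ≤ bseq b x j ∧
      bseq b x j < (a + 1) / (b : ℝ) ^ h} : ℝ) =
      ∑ i ∈ range N, if y / b ^ (i + 1) % b ^ h = a then (1 : ℝ) else 0 := by
    rw [card_filter, sum_Ico_eq_sum_range, Nat.add_sub_cancel_left, Nat.cast_sum,
      ← sum_range_reflect fun i => if y / b ^ (i + 1) % b ^ h = a then (1 : ℝ) else 0]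
    refine sum_congr rfl fun i hi => ?_
    rw [if_congr (hdigit i hi) rfl rfl, Nat.cast_ite, Nat.cast_one, Nat.cast_zero]
  simp only [F, centeredBlockCount, centeredIndicator, sum_sub_distrib, sum_const, card_range,
    nsmul_eq_mul, Nat.cast_pow, hcount]
  congr 2
  ring

end GridCells

section CellCounts

lemma card_le_of_gridCell_inter_Icc_nonempty {S : Finset ℕ} {δ α β : ℝ} (hδ : 0 < δ)
    (hαβ : α ≤ β) (hS : ∀ A ∈ S, (gridCell δ A ∩ Set.Icc α β).Nonempty) :
    (#S : ℝ) ≤ (β - α) / δ + 2 := by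
  have hbounds : ∀ A ∈ S, α / δ - 1 ≤ A ∧ (A : ℝ) ≤ β / δ := by
    intro A hA
    obtain ⟨x, hx, hαx, hxβ⟩ := hS A hA
    rw [sub_le_iff_le_add, div_le_iff₀ hδ, le_div_iff₀ hδ]
    exact ⟨hαx.trans hx.2.le, hx.1.trans hxβ⟩
  rcases S.eq_empty_or_nonempty with rfl | hne
  · rw [card_empty, Nat.cast_zero]
    positivity
  have hcard : #S + S.min' hne ≤ S.max' hne + 1 := by
    have hsub : S ⊆ Icc (S.min' hne) (S.max' hne) := fun A hA =>
      mem_Icc.2 ⟨S.min'_le A hA, S.le_max' A hA⟩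
    have hle := card_le_card hsub
    rw [Nat.card_Icc] at hle
    have := S.min'_le_max' hne
    omega
  have hcard' : (#S : ℝ) + S.min' hne ≤ S.max' hne + 1 := by exact_mod_cast hcard
  rw [sub_div]
  linarith [(hbounds _ (S.min'_mem hne)).1, (hbounds _ (S.max'_mem hne)).2]

lemma card_le_card_mul_of_gridCell_inter_nonempty {S Y : Finset ℕ} {δ ε : ℝ} (hδ : 0 < δ)
    (hε : 0 < ε) (hS : ∀ A ∈ S, ∃ y ∈ Y, (gridCell δ A ∩ gridCell ε y).Nonempty) :
    (#S : ℝ) ≤ #Y * (ε / δ + 2) := by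
  have hcover : S ⊆ Y.biUnion fun y => {A ∈ S | (gridCell δ A ∩ gridCell ε y).Nonempty} := by
    intro A hA
    obtain ⟨y, hy, hAy⟩ := hS A hA
    exact mem_biUnion.2 ⟨y, hy, mem_filter.2 ⟨hA, hAy⟩⟩
  have hfibre (y : ℕ) : (#{A ∈ S | (gridCell δ A ∩ gridCell ε y).Nonempty} : ℝ) ≤ ε / δ + 2 := by
    have := card_le_of_gridCell_inter_Icc_nonempty (α := y * ε) (β := (y + 1) * ε)
      (S := {A ∈ S | (gridCell δ A ∩ gridCell ε y).Nonempty}) hδ (by gcongr; linarith)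
      fun A hA => (mem_filter.1 hA).2.mono (Set.inter_subset_inter_right _ Set.Ico_subset_Icc_self)
    rwa [← sub_mul, add_sub_cancel_left, one_mul] at this
  calc (#S : ℝ) ≤ ∑ y ∈ Y, (#{A ∈ S | (gridCell δ A ∩ gridCell ε y).Nonempty} : ℝ) := by
        exact_mod_cast (card_le_card hcover).trans card_biUnion_le
    _ ≤ #Y * (ε / δ + 2) := by
        simpa only [nsmul_eq_mul] using sum_le_card_nsmul _ _ _ fun y _ => hfibre y

lemma card_le_card_image_div_mul_card_image_mod (Y : Finset ℕ) (B : ℕ) :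
    #Y ≤ #(Y.image (· / B)) * #(Y.image (· % B)) := by
  rw [← card_product]
  refine card_le_card_of_injOn (fun y => (y / B, y % B))
    (fun y hy => mem_product.2 ⟨mem_image_of_mem _ hy, mem_image_of_mem _ hy⟩) ?_
  intro y _ y' _ hyy'
  rw [Prod.mk.injEq] at hyy'
  rw [← Nat.div_add_mod y B, ← Nat.div_add_mod y' B, hyy'.1, hyy'.2]

variable {b h a M N : ℕ} {t K u v : ℝ}

lemma card_adic_gridCell_le (hb : 0 < b) (hh : 0 < h) (ha : a < b ^ h) (ht : 0 < t)
    (hgauss : 4 * (h * (N + h) / (b : ℝ) ^ h) * K ≤ t ^ 2) (hlin : 2 * h * K ≤ t) (huv : u ≤ v)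
    {Y : Finset ℕ} (hY : ∀ y ∈ Y, ∃ x ∈ gridCell ((b : ℝ) ^ (M + N + h))⁻¹ y, x ∈ Set.Icc u v ∧
      t < F M N (a / (b : ℝ) ^ h) ((a + 1) / (b : ℝ) ^ h) (bseq b x)) :
    (#Y : ℝ) ≤ ((b : ℝ) ^ M * (v - u) + 2) * (2 * (b : ℝ) ^ (N + h) * exp (-K)) := by
  have hdiv : (#(Y.image (· / b ^ (N + h))) : ℝ) ≤ (b : ℝ) ^ M * (v - u) + 2 := by
    have := card_le_of_gridCell_inter_Icc_nonempty (S := Y.image (· / b ^ (N + h)))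
      (δ := ((b : ℝ) ^ M)⁻¹) (by positivity) huv ?_
    · rwa [div_inv_eq_mul, mul_comm (v - u)] at this
    simp only [mem_image, forall_exists_index, and_imp, forall_apply_eq_imp_iff₂]
    intro y hy
    obtain ⟨x, hx, hxuv, _⟩ := hY y hy
    refine ⟨x, mem_gridCell_mul_div _ (by positivity) ?_ (by positivity), hxuv⟩
    convert hx using 2
    push_cast
    rw [add_assoc, pow_add (b : ℝ) M]
    field_simp
  have hmod : (#(Y.image (· % b ^ (N + h))) : ℝ) ≤ 2 * (b : ℝ) ^ (N + h) * exp (-K) := by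
    refine le_trans ?_ (card_lt_abs_centeredBlockCount_le hb hh ha ht hgauss hlin)
    refine Nat.cast_le.2 (card_le_card fun r hr => ?_)
    obtain ⟨y, hy, rfl⟩ := mem_image.1 hr
    obtain ⟨x, hx, _, hdev⟩ := hY y hy
    rw [F_bseq_eq_of_mem_gridCell hb hx] at hdev
    rw [mem_filter, mem_range, centeredBlockCount_mod]
    exact ⟨Nat.mod_lt _ (by positivity), hdev⟩
  calc (#Y : ℝ) ≤ #(Y.image (· / b ^ (N + h))) * #(Y.image (· % b ^ (N + h))) := by
        exact_mod_cast card_le_card_image_div_mul_card_image_mod Y (b ^ (N + h))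
    _ ≤ ((b : ℝ) ^ M * (v - u) + 2) * (2 * (b : ℝ) ^ (N + h) * exp (-K)) := by
        gcongr

lemma card_gridCell_le (hb : 0 < b) (hh : 0 < h) (ha : a < b ^ h) (ht : 0 < t)
    (hgauss : 4 * (h * (N + h) / (b : ℝ) ^ h) * K ≤ t ^ 2) (hlin : 2 * h * K ≤ t)
    {δ : ℝ} (hδ : 0 < δ) (hu : 0 ≤ u) (hfine : 2 * δ * (b : ℝ) ^ (M + N + h) ≤ 1)
    (hwide : 2 ≤ (b : ℝ) ^ M * (v - u)) {S : Finset ℕ}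
    (hS : ∀ A ∈ S, ∃ x ∈ gridCell δ A, x ∈ Set.Icc u v ∧
      t < F M N (a / (b : ℝ) ^ h) ((a + 1) / (b : ℝ) ^ h) (bseq b x)) :
    (#S : ℝ) ≤ 8 * ((v - u) / δ) * exp (-K) := by
  set ε : ℝ := ((b : ℝ) ^ (M + N + h))⁻¹ with hε
  have hε_pos : 0 < ε := by positivity
  have huv : 0 < v - u := pos_of_mul_pos_right (two_pos.trans_le hwide) (by positivity)
  choose! x hxδ hxuv hdev using hS
  have hxε : ∀ A ∈ S, x A ∈ gridCell ε ⌊x A / ε⌋₊ := fun A hA =>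
    (mem_gridCell_iff hε_pos).2 ⟨hu.trans (hxuv A hA).1, rfl⟩
  set Y := S.image fun A => ⌊x A / ε⌋₊
  have hSY : (#S : ℝ) ≤ #Y * (ε / δ + 2) :=
    card_le_card_mul_of_gridCell_inter_nonempty hδ hε_pos fun A hA =>
      ⟨_, mem_image_of_mem _ hA, x A, hxδ A hA, hxε A hA⟩
  have hYcard : (#Y : ℝ) ≤ ((b : ℝ) ^ M * (v - u) + 2) * (2 * (b : ℝ) ^ (N + h) * exp (-K)) := by
    refine card_adic_gridCell_le hb hh ha ht hgauss hlin (sub_nonneg.1 huv.le) fun y hy => ?_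
    obtain ⟨A, hA, rfl⟩ := mem_image.1 hy
    exact ⟨x A, hxε A hA, hxuv A hA, hdev A hA⟩
  have hratio : 2 ≤ ε / δ := by
    rw [hε, le_div_iff₀ hδ, le_inv_comm₀ (by positivity) (by positivity), ← one_div,
      le_div_iff₀ (by positivity)]
    linarith
  calc (#S : ℝ) ≤ ((b : ℝ) ^ M * (v - u) + (b : ℝ) ^ M * (v - u)) *
        (2 * (b : ℝ) ^ (N + h) * exp (-K)) * (ε / δ + ε / δ) := by
        refine hSY.trans ?_
        gcongr
        exact hYcard.trans (by gcongr)
    _ = 8 * ((v - u) / δ) * exp (-K) := by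
        rw [hε, add_assoc, pow_add (b : ℝ) M]
        field_simp
        ring

lemma exists_card_ge_forall_gridCell_subset_Ioo {δ : ℝ} (hδ : 0 < δ) (hu : 0 ≤ u) (huv : u ≤ v) :
    ∃ G : Finset ℕ, (∀ A ∈ G, gridCell δ A ⊆ Set.Ioo u v) ∧ (v - u) / δ - 2 ≤ #G := by
  refine ⟨Ico (⌊u / δ⌋₊ + 1) ⌊v / δ⌋₊, fun A hA x hx => ?_, ?_⟩
  · have hA := mem_Ico.1 hA
    have huA : u < A * δ := by
      rw [← div_lt_iff₀ hδ, ← Nat.floor_lt (by positivity)]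
      omega
    have hAv : (A + 1) * δ ≤ v := by
      rw [← le_div_iff₀ hδ]
      exact_mod_cast (Nat.le_floor_iff (div_nonneg (hu.trans huv) hδ.le)).1 hA.2
    exact ⟨huA.trans_le hx.1, hx.2.trans_le hAv⟩
  · have hlow := Nat.floor_le (div_nonneg hu hδ.le)
    have hhigh := Nat.lt_floor_add_one (v / δ)
    have hsub : (⌊v / δ⌋₊ : ℝ) ≤ (⌊v / δ⌋₊ - (⌊u / δ⌋₊ + 1) : ℕ) + (⌊u / δ⌋₊ + 1 : ℕ) := by
      exact_mod_cast le_tsub_add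
    rw [Nat.card_Ico, sub_div]
    push_cast at hsub
    linarith

lemma Ioo_csInf_subset_of_le_volume {s : Set ℝ} (hs : s.OrdConnected) (hbdd : BddBelow s) {c : ℝ}
    (hc : 0 < c) (hvol : ENNReal.ofReal c ≤ MeasureTheory.volume s) :
    Set.Ioo (sInf s) (sInf s + c) ⊆ s := by
  have hne : s.Nonempty := by
    refine MeasureTheory.nonempty_of_measure_ne_zero (μ := MeasureTheory.volume) fun h => ?_
    rw [h, nonpos_iff_eq_zero, ENNReal.ofReal_eq_zero] at hvol
    exact hvol.not_gt hc
  by_cases habove : BddAbove s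
  · have hlen : c ≤ sSup s - sInf s := by
      refine (ENNReal.ofReal_le_ofReal_iff' .. |>.1 ?_).resolve_right hc.not_ge
      rw [← Real.volume_Icc]
      exact hvol.trans (MeasureTheory.measure_mono (subset_Icc_csInf_csSup hbdd habove))
    exact (Set.Ioo_subset_Ioo_right (by linarith)).trans
      (IsConnected.Ioo_csInf_csSup_subset ⟨hne, hs.isPreconnected⟩ hbdd habove)
  · exact Set.Ioo_subset_Ioi_self.trans (hs.isPreconnected.Ioi_csInf_subset hbdd habove)

end CellCounts

section GrowthEstimates

lemma const_mul_pow_le_const_mul_two_pow {C D d n₀ n : ℕ} (hn₀ : 0 < n₀)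
    (hratio : (n₀ + 1) ^ d ≤ 2 * n₀ ^ d) (hbase : C * n₀ ^ d ≤ D * 2 ^ n₀) (hn : n₀ ≤ n) :
    C * n ^ d ≤ D * 2 ^ n := by
  induction n, hn using Nat.le_induction with
  | base => exact hbase
  | succ n hn ih =>
    have hdouble : (n + 1) ^ d ≤ 2 * n ^ d := by
      refine Nat.le_of_mul_le_mul_left (c := n₀ ^ d) ?_ (by positivity)
      calc n₀ ^ d * (n + 1) ^ d = (n₀ * (n + 1)) ^ d := (mul_pow ..).symm
        _ ≤ ((n₀ + 1) * n) ^ d := Nat.pow_le_pow_left (by linarith) d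
        _ = (n₀ + 1) ^ d * n ^ d := mul_pow ..
        _ ≤ 2 * n₀ ^ d * n ^ d := by gcongr
        _ = n₀ ^ d * (2 * n ^ d) := by ring
    calc C * (n + 1) ^ d ≤ C * (2 * n ^ d) := by gcongr
      _ = C * n ^ d * 2 := by ring
      _ ≤ D * 2 ^ n * 2 := by gcongr
      _ = D * 2 ^ (n + 1) := by ring

lemma two_mul_pow_five_le_two_pow {k : ℕ} (hk : 100 ≤ k) : (2 * k) ^ 5 ≤ 2 ^ k := by
  have := const_mul_pow_le_const_mul_two_pow (C := 2 ^ 5) (D := 1) (d := 5) (n₀ := 100)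
    (by norm_num) (by norm_num) (by norm_num) hk
  rwa [mul_pow, ← one_mul (2 ^ k)]

lemma succ_pow_eight_le_two_pow {l : ℕ} (hl : 40 ≤ l) : 9 * (l + 1) ^ 8 ≤ 529 * 2 ^ (l - 1) := by
  have := const_mul_pow_le_const_mul_two_pow (C := 36) (D := 529) (d := 8) (n₀ := 41) (n := l + 1)
    (by norm_num) (by norm_num) (by norm_num) (by omega)
  rw [show l + 1 = l - 1 + 2 by omega, pow_add 2] at this
  rw [show l + 1 = l - 1 + 2 by omega]
  linarith

lemma hundred_mul_succ_le_two_pow {l : ℕ} (hl : 40 ≤ l) : 100 * (l + 1) ≤ 2 ^ (l - 1) := by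
  have := const_mul_pow_le_const_mul_two_pow (C := 400) (D := 1) (d := 1) (n₀ := 41) (n := l + 1)
    (by norm_num) (by norm_num) (by norm_num) (by omega)
  rw [pow_one, one_mul, show l + 1 = l - 1 + 2 by omega, pow_add 2] at this
  omega

lemma pow_four_mul_linear_le_two_pow {h : ℕ} (hh : 1 ≤ h) :
    h ^ 4 * (208 * h + 1000) ≤ 52000 * 2 ^ h := by
  rcases lt_or_ge h 9 with hsmall | hlarge
  · interval_cases h <;> norm_num
  · have hquintic := const_mul_pow_le_const_mul_two_pow (C := 208) (D := 26000) (d := 5) (n₀ := 9)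
      (by norm_num) (by norm_num) (by norm_num) hlarge
    have hquartic := const_mul_pow_le_const_mul_two_pow (C := 1000) (D := 26000) (d := 4) (n₀ := 9)
      (by norm_num) (by norm_num) (by norm_num) hlarge
    linarith

lemma pow_four_mul_log_le_pow {b h : ℕ} (hb : 2 ≤ b) (hh : 1 ≤ h) :
    (h : ℝ) ^ 4 * (3 * (h * log b) + 10) ≤ 520 * (b : ℝ) ^ h := by
  have hb' : (2 : ℝ) ≤ b := by exact_mod_cast hb
  have hpoly : (h : ℝ) ^ 4 * (208 * h + 1000) ≤ 52000 * 2 ^ h := by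
    exact_mod_cast pow_four_mul_linear_le_two_pow hh
  set x := log (b / 2) with hx
  have hx_nonneg : 0 ≤ x := log_nonneg (by linarith)
  have hlog : log b = log 2 + x := by rw [hx, log_div (by linarith) two_ne_zero]; ring
  have hbernoulli : 1 + h * x ≤ ((b : ℝ) / 2) ^ h := by
    calc 1 + h * x ≤ exp (h * x) := by linarith [add_one_le_exp (h * x)]
      _ = ((b : ℝ) / 2) ^ h := by rw [exp_nat_mul, hx, exp_log (by linarith)]
  have hfactor : 3 * (h * log b) + 10 ≤ (2.08 * h + 10) * (1 + h * x) := by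
    rw [hlog]
    nlinarith [log_two_lt_d9, (Nat.cast_nonneg h : (0 : ℝ) ≤ h),
      mul_nonneg (mul_nonneg (Nat.cast_nonneg h : (0 : ℝ) ≤ h) (Nat.cast_nonneg h : (0 : ℝ) ≤ h))
        hx_nonneg, mul_nonneg (Nat.cast_nonneg h : (0 : ℝ) ≤ h) hx_nonneg]
  calc (h : ℝ) ^ 4 * (3 * (h * log b) + 10)
      ≤ (h : ℝ) ^ 4 * ((2.08 * h + 10) * (1 + h * x)) := by gcongr
    _ = ((h : ℝ) ^ 4 * (208 * h + 1000) / 100) * (1 + h * x) := by ring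
    _ ≤ (52000 * 2 ^ h / 100) * (b / 2) ^ h := by gcongr
    _ = 520 * (b : ℝ) ^ h := by rw [div_pow]; field_simp; norm_num

lemma log_le_div_twenty {x : ℝ} (hx : 100 ≤ x) : log x ≤ x / 20 := by
  have hsplit : log x = log 100 + log (x / 100) := by
    rw [log_div (by linarith) (by norm_num)]; ring
  have hlog100 : log 100 ≤ 7 * log 2 := by
    rw [show (7 : ℝ) * log 2 = log (2 ^ 7) by rw [log_pow]; norm_num]
    exact log_le_log (by norm_num) (by norm_num)
  linarith [log_le_sub_one_of_pos (show 0 < x / 100 by linarith), log_two_lt_d9]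

end GrowthEstimates

section BlockParameters

variable {b k h : ℕ}

lemma log_natCast_pos (hb : 2 ≤ b) : 0 < log b := log_pos (by exact_mod_cast hb)

lemma log_two_le_log_natCast (hb : 2 ≤ b) : log 2 ≤ log b :=
  log_le_log two_pos (by exact_mod_cast hb)

lemma le_Nkb (b k : ℕ) : 2 ^ k * (log 2 / log b) ≤ Nkb b k := by
  rw [← mul_div_assoc]
  exact Nat.le_ceil _

lemma Nkb_lt (b k : ℕ) : (Nkb b k : ℝ) < 2 ^ k * (log 2 / log b) + 1 := by
  rw [← mul_div_assoc]
  exact Nat.ceil_lt_add_one (by positivity)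

lemma two_pow_two_pow_le_pow_Nkb (k : ℕ) (hb : 2 ≤ b) :
    (2 : ℝ) ^ 2 ^ k ≤ (b : ℝ) ^ Nkb b k := by
  have hlog := log_natCast_pos hb
  have := mul_le_mul_of_nonneg_right (le_Nkb b k) hlog.le
  rw [← log_le_log_iff (by positivity) (by positivity), log_pow, log_pow, Nat.cast_pow,
    Nat.cast_two]
  rwa [mul_assoc, div_mul_cancel₀ _ hlog.ne'] at this

lemma pow_Nkb_le (k : ℕ) (hb : 2 ≤ b) : (b : ℝ) ^ Nkb b k ≤ b * (2 : ℝ) ^ 2 ^ k := by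
  have hlog := log_natCast_pos hb
  have := mul_le_mul_of_nonneg_right (Nkb_lt b k).le hlog.le
  rw [add_mul, mul_assoc, div_mul_cancel₀ _ hlog.ne'] at this
  rw [← log_le_log_iff (by positivity) (by positivity), log_mul (by positivity) (by positivity),
    log_pow, log_pow, Nat.cast_pow, Nat.cast_two]
  linarith

lemma Nkb_gap_le (hk : 1 ≤ k) (hb : 2 ≤ b) :
    (Nkb b (k + 1) : ℝ) - Nkb b k - 4 * k ≤ 2 ^ k := by
  have hk' : (1 : ℝ) ≤ k := by exact_mod_cast hk
  have hratio : log 2 / log b ≤ 1 :=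
    (div_le_one (log_natCast_pos hb)).2 (log_two_le_log_natCast hb)
  have hmain : (2 : ℝ) ^ k * (log 2 / log b) ≤ 2 ^ k :=
    mul_le_of_le_one_right (by positivity) hratio
  have hnext := Nkb_lt b (k + 1)
  rw [pow_succ] at hnext
  linarith [le_Nkb b k]

lemma two_pow_le_Nkb_gap_mul (hk : 100 ≤ k) (hb : 2 ≤ b) (hbk : b ≤ k) :
    (2 : ℝ) ^ k ≤ ((Nkb b (k + 1) : ℝ) - Nkb b k - 4 * k) * (2 * k) := by
  have hk' : (100 : ℝ) ≤ k := by exact_mod_cast hk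
  have hpoly : (2 * (k : ℝ)) ^ 5 ≤ 2 ^ k := by exact_mod_cast two_mul_pow_five_le_two_pow hk
  have hratio : 1 ≤ log 2 / log b * k := by
    have hbpow : (b : ℝ) ≤ 2 ^ k := by
      exact_mod_cast Nat.lt_two_pow_self.le.trans (Nat.pow_le_pow_right two_pos hbk)
    have := log_le_log (by positivity) hbpow
    rw [log_pow] at this
    rw [div_mul_eq_mul_div, le_div_iff₀ (log_natCast_pos hb)]
    linarith
  have hgap : (2 : ℝ) ^ k * (log 2 / log b) - 1 - 4 * k ≤
      (Nkb b (k + 1) : ℝ) - Nkb b k - 4 * k := by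
    have hnext := le_Nkb b (k + 1)
    rw [pow_succ] at hnext
    linarith [Nkb_lt b k]
  have hmain : (2 : ℝ) ^ k ≤ 2 ^ k * (log 2 / log b * k) :=
    le_mul_of_one_le_right (by positivity) hratio
  have herror : (1 + 4 * (k : ℝ)) * (2 * k) ≤ (2 * (k : ℝ)) ^ 5 := by
    have : (k : ℝ) ^ 2 * 1 ≤ (k : ℝ) ^ 2 * (k : ℝ) ^ 3 := by
      gcongr
      exact one_le_pow₀ (by linarith)
    nlinarith
  calc (2 : ℝ) ^ k ≤ (2 ^ k * (log 2 / log b) - 1 - 4 * k) * (2 * k) := by linarith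
    _ ≤ ((Nkb b (k + 1) : ℝ) - Nkb b k - 4 * k) * (2 * k) := by gcongr

lemma Nkb_gap_pos (hk : 100 ≤ k) (hb : 2 ≤ b) (hbk : b ≤ k) :
    0 < (Nkb b (k + 1) : ℝ) - Nkb b k - 4 * k :=
  pos_of_mul_pos_left (lt_of_lt_of_le (by positivity) (two_pow_le_Nkb_gap_mul hk hb hbk))
    (by positivity)

lemma Nkb_gap_le_two_pow_nkb (hk : 100 ≤ k) (hb : 2 ≤ b) (hbk : b ≤ k) :
    (Nkb b (k + 1) : ℝ) - Nkb b k - 4 * k ≤ 2 ^ nkb b k := by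
  rw [← rpow_natCast, ← logb_le_iff_le_rpow one_lt_two (Nkb_gap_pos hk hb hbk)]
  exact Nat.le_ceil _

lemma nkb_le (hk : 100 ≤ k) (hb : 2 ≤ b) (hbk : b ≤ k) : nkb b k ≤ k := by
  rw [nkb, Nat.ceil_le, logb_le_iff_le_rpow one_lt_two (Nkb_gap_pos hk hb hbk), rpow_natCast]
  exact Nkb_gap_le (by omega) hb

lemma four_mul_le_five_mul_nkb (hk : 100 ≤ k) (hb : 2 ≤ b) (hbk : b ≤ k) :
    4 * k ≤ 5 * nkb b k := by
  have hgap : 2 ^ k ≤ 2 ^ nkb b k * (2 * k) := by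
    have := two_pow_le_Nkb_gap_mul hk hb hbk
    have := Nkb_gap_le_two_pow_nkb hk hb hbk
    have : (2 : ℝ) ^ k ≤ 2 ^ nkb b k * (2 * k) := le_trans ‹_› (by gcongr)
    exact_mod_cast this
  have hpow : 2 ^ (k * 5) ≤ 2 ^ (nkb b k * 5 + k) :=
    calc 2 ^ (k * 5) = (2 ^ k) ^ 5 := pow_mul ..
      _ ≤ (2 ^ nkb b k * (2 * k)) ^ 5 := by gcongr
      _ = 2 ^ (nkb b k * 5) * (2 * k) ^ 5 := by rw [mul_pow, ← pow_mul]
      _ ≤ 2 ^ (nkb b k * 5) * 2 ^ k := Nat.mul_le_mul_left _ (two_mul_pow_five_le_two_pow hk)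
      _ = 2 ^ (nkb b k * 5 + k) := (pow_add ..).symm
  have := (Nat.pow_le_pow_iff_right one_lt_two).1 hpow
  omega

lemma lt_of_le_Tbk (hT : h ≤ Tbk b k) : (h : ℝ) < nkb b k * log 2 / (2 * log b) + 1 :=
  (Nat.cast_le.2 hT).trans_lt
    (Nat.ceil_lt_add_one (by positivity))

lemma mul_log_le_of_le_Tbk (hb : 2 ≤ b) (hT : h ≤ Tbk b k) :
    h * log b ≤ nkb b k * log 2 / 2 + log b := by
  have hlog := log_natCast_pos hb
  calc h * log b ≤ (nkb b k * log 2 / (2 * log b) + 1) * log b := by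
        gcongr
        exact (lt_of_le_Tbk hT).le
    _ = nkb b k * log 2 / 2 + log b := by field_simp

lemma two_mul_le_of_le_Tbk (hb : 2 ≤ b) (hT : h ≤ Tbk b k) : 2 * h ≤ nkb b k + 2 := by
  have hlog := log_natCast_pos hb
  have hhalf : nkb b k * log 2 / (2 * log b) ≤ nkb b k / 2 := by
    rw [div_le_div_iff₀ (by positivity) two_pos]
    have := mul_le_mul_of_nonneg_left (log_two_le_log_natCast hb) (nkb b k).cast_nonneg
    linarith
  have : 2 * (h : ℝ) ≤ nkb b k + 2 := by linarith [lt_of_le_Tbk hT]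
  exact_mod_cast this

lemma pow_sq_le_of_le_Tbk (hb : 2 ≤ b) (hT : h ≤ Tbk b k) :
    ((b : ℝ) ^ h) ^ 2 ≤ (b : ℝ) ^ 2 * 2 ^ nkb b k := by
  rw [← log_le_log_iff (by positivity) (by positivity), log_mul (by positivity) (by positivity),
    log_pow, log_pow, log_pow, log_pow, Nat.cast_two]
  linarith [mul_log_le_of_le_Tbk hb hT]

lemma two_mul_self_mul_pow_le_two_pow (hk : 100 ≤ k) (hb : 2 ≤ b) (hbk : b ≤ k)
    (hT : h ≤ Tbk b k) : 2 * (b : ℝ) * (b : ℝ) ^ h ≤ 2 ^ k := by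
  have hk' : (100 : ℝ) ≤ k := by exact_mod_cast hk
  have hpoly : (2 * (k : ℝ)) ^ 5 ≤ 2 ^ k := by exact_mod_cast two_mul_pow_five_le_two_pow hk
  have hnkb : (2 : ℝ) ^ nkb b k ≤ 2 ^ k := pow_le_pow_right₀ one_le_two (nkb_le hk hb hbk)
  refine le_of_sq_le_sq ?_ (by positivity)
  calc (2 * (b : ℝ) * (b : ℝ) ^ h) ^ 2 = 4 * (b : ℝ) ^ 2 * ((b : ℝ) ^ h) ^ 2 := by ring
    _ ≤ 4 * (b : ℝ) ^ 2 * ((b : ℝ) ^ 2 * 2 ^ nkb b k) := by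
        gcongr
        exact pow_sq_le_of_le_Tbk hb hT
    _ = 4 * (b : ℝ) ^ 4 * 2 ^ nkb b k := by ring
    _ ≤ 4 * (k : ℝ) ^ 4 * 2 ^ k := by gcongr
    _ ≤ (2 * (k : ℝ)) ^ 5 * 2 ^ k := by
        gcongr
        nlinarith [pow_pos (show (0 : ℝ) < k by positivity) 4]
    _ ≤ (2 ^ k) ^ 2 := by rw [sq]; gcongr

end BlockParameters

section Deviations

variable {b k h a l m : ℕ}

/-- The size of deviation allowed in the definition of `Hset` for blocks of length `h` and windows
of length `2 ^ (l - 1)`; there `w` is `nkb b k - l + 1`. -/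
noncomputable def deviationThreshold (l h : ℕ) (w : ℝ) : ℝ :=
  46 * (2 : ℝ) ^ (((l : ℝ) - 1) / 2) * (h : ℝ) ^ (-(3 / 2) : ℝ) * √w

lemma deviationThreshold_pos {w : ℝ} (hh : 1 ≤ h) (hw : 0 < w) : 0 < deviationThreshold l h w := by
  unfold deviationThreshold
  positivity

lemma deviationThreshold_sq {w : ℝ} (hl : 1 ≤ l) (hh : 1 ≤ h) (hw : 0 ≤ w) :
    deviationThreshold l h w ^ 2 = 2116 * (2 : ℝ) ^ (l - 1) * w / (h : ℝ) ^ 3 := by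
  have hh' : (0 : ℝ) < h := by exact_mod_cast hh
  have htwo : ((2 : ℝ) ^ (((l : ℝ) - 1) / 2)) ^ 2 = (2 : ℝ) ^ (l - 1) := by
    rw [← rpow_natCast, ← rpow_mul zero_le_two, ← rpow_natCast]
    congr 1
    push_cast [hl]
    ring
  have hpow : ((h : ℝ) ^ (-(3 / 2) : ℝ)) ^ 2 = ((h : ℝ) ^ 3)⁻¹ := by
    rw [← rpow_natCast, ← rpow_mul hh'.le, ← rpow_natCast (h : ℝ) 3, ← rpow_neg hh'.le]
    norm_num
  rw [deviationThreshold, mul_pow, mul_pow, mul_pow, htwo, hpow, sq_sqrt hw]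
  ring

lemma four_mul_variance_mul_le_deviationThreshold_sq {w : ℝ} (hb : 2 ≤ b) (hh : 1 ≤ h) (hw : 0 ≤ w)
    (hhl : 100 * h ≤ 2 ^ (l - 1)) (hl : 1 ≤ l) :
    4 * (h * ((2 ^ (l - 1) : ℕ) + h) / (b : ℝ) ^ h) * (w * (3 * (h * log b) + 10)) ≤
      deviationThreshold l h w ^ 2 := by
  have hwindow : ((2 ^ (l - 1) : ℕ) : ℝ) + h ≤ 1.01 * 2 ^ (l - 1) := by
    have : 100 * (h : ℝ) ≤ 2 ^ (l - 1) := by exact_mod_cast hhl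
    push_cast
    linarith
  have hpow := pow_four_mul_log_le_pow hb hh
  rw [deviationThreshold_sq hl hh hw]
  calc 4 * (h * ((2 ^ (l - 1) : ℕ) + h) / (b : ℝ) ^ h) * (w * (3 * (h * log b) + 10))
      ≤ 4 * (h * (1.01 * 2 ^ (l - 1)) / (b : ℝ) ^ h) * (w * (3 * (h * log b) + 10)) := by gcongr
    _ = 4.04 * 2 ^ (l - 1) * w * ((h : ℝ) ^ 4 * (3 * (h * log b) + 10)) /
        ((h : ℝ) ^ 3 * (b : ℝ) ^ h) := by field_simp; ring
    _ ≤ 4.04 * 2 ^ (l - 1) * w * (520 * (b : ℝ) ^ h) / ((h : ℝ) ^ 3 * (b : ℝ) ^ h) := by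
        exact div_le_div_of_nonneg_right (mul_le_mul_of_nonneg_left hpow (by positivity))
          (by positivity)
    _ = 2100.8 * 2 ^ (l - 1) * w / (h : ℝ) ^ 3 := by field_simp; ring
    _ ≤ 2116 * 2 ^ (l - 1) * w / (h : ℝ) ^ 3 := by gcongr; norm_num

lemma two_mul_mul_le_deviationThreshold {w E : ℝ} (hl : 40 ≤ l) (hh : 1 ≤ h) (hhl : h ≤ l + 1)
    (hw : 0 < w) (hwl : w ≤ l + 1) (hE : 0 ≤ E) (hEl : E ≤ 3 * (l + 1)) :
    2 * h * (w * E) ≤ deviationThreshold l h w := by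
  have hhl' : (h : ℝ) ≤ l + 1 := by exact_mod_cast hhl
  have hpoly : 9 * ((l : ℝ) + 1) ^ 8 ≤ 529 * 2 ^ (l - 1) := by
    exact_mod_cast succ_pow_eight_le_two_pow hl
  refine le_of_sq_le_sq ?_ (deviationThreshold_pos hh hw).le
  rw [deviationThreshold_sq (by omega) hh hw.le, le_div_iff₀ (by positivity)]
  calc (2 * h * (w * E)) ^ 2 * (h : ℝ) ^ 3 = 4 * w * ((h : ℝ) ^ 5 * w * E ^ 2) := by ring
    _ ≤ 4 * w * (((l : ℝ) + 1) ^ 5 * (l + 1) * (3 * (l + 1)) ^ 2) := by gcongr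
    _ = 4 * w * (9 * ((l : ℝ) + 1) ^ 8) := by ring
    _ ≤ 4 * w * (529 * 2 ^ (l - 1)) := by gcongr
    _ = 2116 * 2 ^ (l - 1) * w := by ring

lemma three_mul_log_add_ten_le (hk : 100 ≤ k) (hb : 2 ≤ b) (hbk : b ≤ k) (hT : h ≤ Tbk b k)
    (hnl : nkb b k ≤ 2 * l) : 3 * (h * log b) + 10 ≤ 3 * ((l : ℝ) + 1) := by
  have hk' : (100 : ℝ) ≤ k := by exact_mod_cast hk
  have hkn : 4 * (k : ℝ) ≤ 5 * nkb b k := by exact_mod_cast four_mul_le_five_mul_nkb hk hb hbk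
  have hnl' : (nkb b k : ℝ) ≤ 2 * l := by exact_mod_cast hnl
  have hlog : log b ≤ k / 20 :=
    (log_le_log (by positivity) (by exact_mod_cast hbk)).trans (log_le_div_twenty hk')
  have hhalf : (nkb b k : ℝ) * log 2 ≤ 2 * l * 0.6932 := by
    gcongr
    linarith [log_two_lt_d9]
  linarith [mul_log_le_of_le_Tbk hb hT]

lemma exp_neg_mul_le {n : ℕ} (hb : 1 ≤ b) (hn : 1 ≤ n) :
    exp (-(n * (3 * (h * log b) + 10))) ≤ ((b : ℝ) ^ (3 * h))⁻¹ * ((1024 : ℝ) ^ n)⁻¹ := by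
  have hb' : (0 : ℝ) < b := by exact_mod_cast hb
  have hpow : (b : ℝ) ^ (3 * h) = exp (3 * (h * log b)) := by
    rw [← exp_log (pow_pos hb' _), log_pow]
    push_cast
    ring_nf
  have hten : (1024 : ℝ) ≤ exp 10 := by
    calc (1024 : ℝ) = 2 ^ 10 := by norm_num
      _ ≤ exp 1 ^ 10 := by gcongr; linarith [add_one_le_exp (1 : ℝ)]
      _ = exp 10 := by rw [← exp_nat_mul]; norm_num
  have hlog : (3 : ℝ) * (h * log b) ≤ n * (3 * (h * log b)) :=
    le_mul_of_one_le_left (by positivity) (by exact_mod_cast hn)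
  calc exp (-(n * (3 * (h * log b) + 10))) ≤ exp (-(3 * (h * log b)) + -(n * 10)) :=
        exp_le_exp.2 (by linarith)
    _ = ((b : ℝ) ^ (3 * h))⁻¹ * (exp 10 ^ n)⁻¹ := by
        rw [exp_add, exp_neg, exp_neg, hpow, exp_nat_mul]
    _ ≤ ((b : ℝ) ^ (3 * h))⁻¹ * ((1024 : ℝ) ^ n)⁻¹ := by gcongr

/-- The length of the dyadic intervals among which the theorem selects one. -/
noncomputable def gridMesh (k : ℕ) : ℝ := ((2 : ℝ) ^ (2 ^ (k + 1) + k))⁻¹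

lemma gridMesh_pos (k : ℕ) : 0 < gridMesh k := by
  unfold gridMesh
  positivity

lemma two_mul_gridMesh_mul_pow_le_one {R : ℕ} (hk : 100 ≤ k) (hb : 2 ≤ b) (hbk : b ≤ k)
    (hT : h ≤ Tbk b k) (hR : R ≤ Nkb b (k + 1)) :
    2 * gridMesh k * (b : ℝ) ^ (R + h) ≤ 1 := by
  have hpow : (b : ℝ) ^ R ≤ b * (2 : ℝ) ^ 2 ^ (k + 1) :=
    (pow_le_pow_right₀ (by exact_mod_cast (by omega : 1 ≤ b)) hR).trans (pow_Nkb_le _ hb)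
  rw [gridMesh, mul_comm (2 : ℝ), mul_assoc, inv_mul_le_iff₀ (by positivity), mul_one]
  calc 2 * (b : ℝ) ^ (R + h) ≤ 2 * ((b * (2 : ℝ) ^ 2 ^ (k + 1)) * (b : ℝ) ^ h) := by
        rw [pow_add]; gcongr
    _ = (2 : ℝ) ^ 2 ^ (k + 1) * (2 * (b : ℝ) * (b : ℝ) ^ h) := by ring
    _ ≤ (2 : ℝ) ^ 2 ^ (k + 1) * 2 ^ k := by
        gcongr
        exact two_mul_self_mul_pow_le_two_pow hk hb hbk hT
    _ = (2 : ℝ) ^ (2 ^ (k + 1) + k) := (pow_add ..).symm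

lemma two_le_pow_mul {M : ℕ} {x : ℝ} (hk : 1 ≤ k) (hb : 2 ≤ b) (hM : Nkb b k + 4 * k ≤ M)
    (hx : ((2 : ℝ) ^ (2 ^ k + k))⁻¹ ≤ x) : 2 ≤ (b : ℝ) ^ M * x := by
  have hb' : (2 : ℝ) ≤ b := by exact_mod_cast hb
  have hpow : (2 : ℝ) ^ 2 ^ k * 2 ^ (4 * k) ≤ (b : ℝ) ^ M := by
    calc (2 : ℝ) ^ 2 ^ k * 2 ^ (4 * k) ≤ (b : ℝ) ^ Nkb b k * (b : ℝ) ^ (4 * k) := by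
          gcongr
          exact two_pow_two_pow_le_pow_Nkb k hb
      _ = (b : ℝ) ^ (Nkb b k + 4 * k) := (pow_add ..).symm
      _ ≤ (b : ℝ) ^ M := pow_le_pow_right₀ (by linarith) hM
  calc (2 : ℝ) ≤ 2 ^ (3 * k) := le_self_pow₀ one_le_two (by omega)
    _ = (2 : ℝ) ^ 2 ^ k * 2 ^ (4 * k) * ((2 : ℝ) ^ (2 ^ k + k))⁻¹ := by
        rw [eq_mul_inv_iff_mul_eq₀ (by positivity), ← pow_add, ← pow_add]
        congr 1
        ring
    _ ≤ (b : ℝ) ^ M * x := by gcongr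

end Deviations

section ExceptionalCells

variable {b k h a l m : ℕ} {u v : ℝ} {G : Finset ℕ}

/-- The set whose union over the admissible `(h, a, l, m)`, intersected with `A`, is
`Hset b k A`. -/
def deviationSet (b k h a l m : ℕ) : Set ℝ :=
  {x | deviationThreshold l h ((nkb b k : ℝ) - l + 1) <
    F (Nkb b k + 4 * k + m * 2 ^ l) (2 ^ (l - 1)) ((a : ℝ) / (b : ℝ) ^ h)
      (((a : ℝ) + 1) / (b : ℝ) ^ h) (bseq b x)}

/-- The indices in `G` of the cells of mesh `δ` that meet `s`. -/
noncomputable def cellsMeeting (δ : ℝ) (G : Finset ℕ) (s : Set ℝ) : Finset ℕ :=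
  {A ∈ G | (gridCell δ A ∩ s).Nonempty}

lemma card_cellsMeeting_le_sum {ι : Type*} {δ : ℝ} {I : Finset ι} {s : Set ℝ} {t : ι → Set ℝ}
    {w : ι → ℝ} (hs : s ⊆ ⋃ i ∈ I, t i) (ht : ∀ i ∈ I, (#(cellsMeeting δ G (t i)) : ℝ) ≤ w i) :
    (#(cellsMeeting δ G s) : ℝ) ≤ ∑ i ∈ I, w i := by
  have hcover : cellsMeeting δ G s ⊆ I.biUnion fun i => cellsMeeting δ G (t i) := by
    intro A hA
    obtain ⟨hAG, x, hxA, hxs⟩ := mem_filter.1 hA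
    obtain ⟨i, hi, hxi⟩ := Set.mem_iUnion₂.1 (hs hxs)
    exact mem_biUnion.2 ⟨i, hi, mem_filter.2 ⟨hAG, x, hxA, hxi⟩⟩
  calc (#(cellsMeeting δ G s) : ℝ) ≤ ∑ i ∈ I, (#(cellsMeeting δ G (t i)) : ℝ) := by
        exact_mod_cast (card_le_card hcover).trans card_biUnion_le
    _ ≤ ∑ i ∈ I, w i := sum_le_sum ht

lemma card_cellsMeeting_deviationSet_le (hk : 100 ≤ k) (hb : 2 ≤ b) (hbk : b ≤ k) (hh : 1 ≤ h)
    (hT : h ≤ Tbk b k) (ha : a < b ^ h) (hnl : nkb b k ≤ 2 * l) (hln : l ≤ nkb b k)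
    (hm : Nkb b k + 4 * k + m * 2 ^ l + 2 ^ (l - 1) ≤ Nkb b (k + 1)) (hu : 0 ≤ u)
    (huv : ((2 : ℝ) ^ (2 ^ k + k))⁻¹ ≤ v - u)
    (hG : ∀ A ∈ G, gridCell (gridMesh k) A ⊆ Set.Ioo u v) :
    (#(cellsMeeting (gridMesh k) G (deviationSet b k h a l m)) : ℝ) ≤
      8 * ((v - u) / gridMesh k) *
        (((b : ℝ) ^ (3 * h))⁻¹ * ((1024 : ℝ) ^ (nkb b k - l + 1))⁻¹) := by
  have hl : 40 ≤ l := by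
    have := four_mul_le_five_mul_nkb hk hb hbk
    omega
  have hhl : h ≤ l + 1 := by
    have := two_mul_le_of_le_Tbk hb hT
    omega
  have hw : (nkb b k : ℝ) - l + 1 = (nkb b k - l + 1 : ℕ) := by
    push_cast [hln]
    ring
  have hw_pos : 0 < (nkb b k : ℝ) - l + 1 := by
    rw [hw]
    positivity
  have hwl : (nkb b k : ℝ) - l + 1 ≤ l + 1 := by
    rw [hw]
    exact_mod_cast (by omega : nkb b k - l + 1 ≤ l + 1)
  have hh_window : 100 * h ≤ 2 ^ (l - 1) :=
    (Nat.mul_le_mul_left 100 hhl).trans (hundred_mul_succ_le_two_pow hl)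
  have hwidth : 0 ≤ v - u := le_trans (by positivity) huv
  have hmesh := gridMesh_pos k
  refine (card_gridCell_le (by omega) hh ha (deviationThreshold_pos hh hw_pos)
    (four_mul_variance_mul_le_deviationThreshold_sq hb hh hw_pos.le hh_window (by omega))
    (two_mul_mul_le_deviationThreshold hl hh hhl hw_pos hwl (by positivity)
      (three_mul_log_add_ten_le hk hb hbk hT hnl)) hmesh hu
    (two_mul_gridMesh_mul_pow_le_one hk hb hbk hT hm)
    (two_le_pow_mul (by omega) hb le_self_add huv) fun A hA => ?_).trans ?_
  · obtain ⟨hAG, x, hxA, hdev⟩ := mem_filter.1 hA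
    exact ⟨x, hxA, Set.Ioo_subset_Icc_self (hG A hAG hxA), hdev⟩
  · rw [hw]
    gcongr
    exact exp_neg_mul_le (by omega) (by omega)

lemma shift_lt_two_pow (hk : 100 ≤ k) (hb : 2 ≤ b) (hbk : b ≤ k) (hln : l ≤ nkb b k)
    (hm : Nkb b k + 4 * k + m * 2 ^ l ≤ Nkb b (k + 1)) : m < 2 ^ (nkb b k - l + 1) := by
  have hprod : m * 2 ^ l ≤ 2 ^ nkb b k := by
    have hgap := Nkb_gap_le_two_pow_nkb hk hb hbk
    have hm' : (Nkb b k : ℝ) + 4 * k + m * 2 ^ l ≤ Nkb b (k + 1) := by exact_mod_cast hm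
    have : (m : ℝ) * 2 ^ l ≤ 2 ^ nkb b k := by linarith
    exact_mod_cast this
  refine lt_of_le_of_lt ?_ (Nat.pow_lt_pow_right one_lt_two (Nat.lt_succ_self _))
  refine Nat.le_of_mul_le_mul_right (c := 2 ^ l) ?_ (by positivity)
  rwa [← pow_add, Nat.sub_add_cancel hln]

lemma sum_Ico_one_pow_le {r : ℝ} (hr : 0 ≤ r) (hr' : r ≤ 1 / 2) (n : ℕ) :
    ∑ i ∈ Ico 1 n, r ^ i ≤ 2 * r := by
  calc ∑ i ∈ Ico 1 n, r ^ i = r * ∑ i ∈ range (n - 1), r ^ i := by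
        simp only [sum_Ico_eq_sum_range, pow_add, pow_one, mul_sum]
    _ ≤ r * ∑ i ∈ range (n - 1), (1 / 2) ^ i := by gcongr
    _ ≤ r * 2 := by gcongr; exact sum_geometric_two_le _
    _ = 2 * r := mul_comm ..

lemma card_cellsMeeting_iUnion_shift_le (hk : 100 ≤ k) (hb : 2 ≤ b) (hbk : b ≤ k) (hh : 1 ≤ h)
    (hT : h ≤ Tbk b k) (ha : a < b ^ h) (hnl : nkb b k ≤ 2 * l) (hln : l ≤ nkb b k) (hu : 0 ≤ u)
    (huv : ((2 : ℝ) ^ (2 ^ k + k))⁻¹ ≤ v - u)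
    (hG : ∀ A ∈ G, gridCell (gridMesh k) A ⊆ Set.Ioo u v) :
    (#(cellsMeeting (gridMesh k) G
      (⋃ (m : ℕ) (_ : Nkb b k + 4 * k + m * 2 ^ l + 2 ^ (l - 1) ≤ Nkb b (k + 1)),
        deviationSet b k h a l m)) : ℝ) ≤
      8 * ((v - u) / gridMesh k) * ((b : ℝ) ^ (3 * h))⁻¹ * (1 / 512) ^ (nkb b k - l + 1) := by
  set shifts := {m ∈ range (2 ^ (nkb b k - l + 1)) |
    Nkb b k + 4 * k + m * 2 ^ l + 2 ^ (l - 1) ≤ Nkb b (k + 1)}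
  have hwidth : 0 ≤ v - u := le_trans (by positivity) huv
  have hmesh := gridMesh_pos k
  have hcard : (#shifts : ℝ) ≤ 2 ^ (nkb b k - l + 1) := by
    exact_mod_cast (card_filter_le _ _).trans (card_range _).le
  refine (card_cellsMeeting_le_sum (I := shifts) (t := deviationSet b k h a l) ?_ fun m hm =>
    card_cellsMeeting_deviationSet_le hk hb hbk hh hT ha hnl hln (mem_filter.1 hm).2 hu huv
      hG).trans ?_
  · refine Set.iUnion₂_subset fun m hm => Set.subset_biUnion_of_mem (u := deviationSet b k h a l) ?_
    exact mem_filter.2 ⟨mem_range.2 (shift_lt_two_pow hk hb hbk hln (le_self_add.trans hm)), hm⟩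
  · rw [sum_const, nsmul_eq_mul]
    calc (#shifts : ℝ) * (8 * ((v - u) / gridMesh k) *
          (((b : ℝ) ^ (3 * h))⁻¹ * ((1024 : ℝ) ^ (nkb b k - l + 1))⁻¹))
        ≤ 2 ^ (nkb b k - l + 1) * (8 * ((v - u) / gridMesh k) *
          (((b : ℝ) ^ (3 * h))⁻¹ * ((1024 : ℝ) ^ (nkb b k - l + 1))⁻¹)) := by gcongr
      _ = 8 * ((v - u) / gridMesh k) * ((b : ℝ) ^ (3 * h))⁻¹ *
          (2 / 1024) ^ (nkb b k - l + 1) := by rw [div_pow]; ring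
      _ = _ := by norm_num

lemma card_cellsMeeting_iUnion_scale_le (hk : 100 ≤ k) (hb : 2 ≤ b) (hbk : b ≤ k) (hh : 1 ≤ h)
    (hT : h ≤ Tbk b k) (ha : a < b ^ h) (hu : 0 ≤ u) (huv : ((2 : ℝ) ^ (2 ^ k + k))⁻¹ ≤ v - u)
    (hG : ∀ A ∈ G, gridCell (gridMesh k) A ⊆ Set.Ioo u v) :
    (#(cellsMeeting (gridMesh k) G (⋃ (l : ℕ) (_ : nkb b k ≤ 2 * l) (_ : l ≤ nkb b k)
      (m : ℕ) (_ : Nkb b k + 4 * k + m * 2 ^ l + 2 ^ (l - 1) ≤ Nkb b (k + 1)),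
        deviationSet b k h a l m)) : ℝ) ≤
      (v - u) / gridMesh k / 32 * ((b : ℝ) ^ (3 * h))⁻¹ := by
  have hwidth : 0 ≤ v - u := le_trans (by positivity) huv
  have hmesh := gridMesh_pos k
  refine (card_cellsMeeting_le_sum (I := {l ∈ range (nkb b k + 1) | nkb b k ≤ 2 * l})
    (t := fun l => ⋃ (m : ℕ) (_ : Nkb b k + 4 * k + m * 2 ^ l + 2 ^ (l - 1) ≤ Nkb b (k + 1)),
      deviationSet b k h a l m) ?_ fun l hl =>
        card_cellsMeeting_iUnion_shift_le hk hb hbk hh hT ha (mem_filter.1 hl).2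
          (Nat.lt_succ_iff.1 (mem_range.1 (mem_filter.1 hl).1)) hu huv hG).trans ?_
  · intro x hx
    simp only [Set.mem_iUnion, mem_filter, mem_range, Nat.lt_succ_iff] at hx ⊢
    obtain ⟨l, hnl, hln, hx⟩ := hx
    exact ⟨l, ⟨hln, hnl⟩, hx⟩
  · rw [← mul_sum]
    calc 8 * ((v - u) / gridMesh k) * ((b : ℝ) ^ (3 * h))⁻¹ *
          ∑ l ∈ range (nkb b k + 1) with nkb b k ≤ 2 * l, (1 / 512 : ℝ) ^ (nkb b k - l + 1)
        ≤ 8 * ((v - u) / gridMesh k) * ((b : ℝ) ^ (3 * h))⁻¹ *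
          ∑ l ∈ range (nkb b k + 1), (1 / 512 : ℝ) ^ (nkb b k - l + 1) := by
          gcongr
          exact filter_subset _ _
      _ = 8 * ((v - u) / gridMesh k) * ((b : ℝ) ^ (3 * h))⁻¹ *
          ∑ i ∈ Ico 1 (nkb b k + 2), (1 / 512 : ℝ) ^ i := by
          rw [sum_Ico_eq_sum_range, ← sum_range_reflect]
          congr 1
          refine sum_congr (by simp) fun l hl => ?_
          congr 1
          have := mem_range.1 hl
          omega
      _ ≤ 8 * ((v - u) / gridMesh k) * ((b : ℝ) ^ (3 * h))⁻¹ * (2 * (1 / 512)) := by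
          gcongr
          exact sum_Ico_one_pow_le (by norm_num) (by norm_num) _
      _ = (v - u) / gridMesh k / 32 * ((b : ℝ) ^ (3 * h))⁻¹ := by ring

lemma sum_sigma_inv_pow_le (hb : 2 ≤ b) (n : ℕ) :
    ∑ p ∈ (Ico 1 n).sigma fun h => range (b ^ h), ((b : ℝ) ^ (3 * p.1))⁻¹ ≤
      2 * ((b : ℝ) ^ 2)⁻¹ := by
  have hb' : (2 : ℝ) ≤ b := by exact_mod_cast hb
  have hterm (h : ℕ) : ((b ^ h : ℕ) : ℝ) * ((b : ℝ) ^ (3 * h))⁻¹ = (((b : ℝ) ^ 2)⁻¹) ^ h := by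
    rw [inv_pow, ← pow_mul, show 3 * h = h + 2 * h by ring, pow_add]
    push_cast
    field_simp
  rw [sum_sigma]
  simp only [sum_const, card_range, nsmul_eq_mul, hterm]
  refine sum_Ico_one_pow_le (by positivity) ?_ n
  rw [← one_div]
  gcongr
  nlinarith

lemma card_cellsMeeting_Hset_le (hk : 100 ≤ k) (hb : 2 ≤ b) (hbk : b ≤ k) (hu : 0 ≤ u)
    (huv : ((2 : ℝ) ^ (2 ^ k + k))⁻¹ ≤ v - u)
    (hG : ∀ A ∈ G, gridCell (gridMesh k) A ⊆ Set.Ioo u v) :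
    (#(cellsMeeting (gridMesh k) G (Hset b k Set.univ)) : ℝ) ≤
      (v - u) / gridMesh k / 16 * ((b : ℝ) ^ 2)⁻¹ := by
  have hwidth : 0 ≤ v - u := le_trans (by positivity) huv
  have hmesh := gridMesh_pos k
  set t : ℕ → ℕ → Set ℝ := fun h a => ⋃ (l : ℕ) (_ : nkb b k ≤ 2 * l) (_ : l ≤ nkb b k)
      (m : ℕ) (_ : Nkb b k + 4 * k + m * 2 ^ l + 2 ^ (l - 1) ≤ Nkb b (k + 1)),
        deviationSet b k h a l m with ht
  refine (card_cellsMeeting_le_sum (I := (Ico 1 (Tbk b k + 1)).sigma fun h => range (b ^ h))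
    (t := fun p => t p.1 p.2)
    (w := fun p => (v - u) / gridMesh k / 32 * ((b : ℝ) ^ (3 * p.1))⁻¹)
    ?_ fun p hp => ?_).trans ?_
  · intro x hx
    simp only [Hset, Set.mem_iUnion] at hx
    obtain ⟨h, hh, hT, a, ha, l, hnl, hln, m, hm, -, hdev⟩ := hx
    refine Set.mem_iUnion₂.2 ⟨⟨h, a⟩, mem_sigma.2 ⟨mem_Ico.2 ⟨hh, Nat.lt_succ_of_le hT⟩,
      mem_range.2 ha⟩, ?_⟩
    simp only [ht, Set.mem_iUnion]
    exact ⟨l, hnl, hln, m, hm, hdev⟩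
  · obtain ⟨hp₁, hp₂⟩ := mem_sigma.1 hp
    obtain ⟨hh, hT⟩ := mem_Ico.1 hp₁
    exact card_cellsMeeting_iUnion_scale_le hk hb hbk hh (Nat.lt_succ_iff.1 hT) (mem_range.1 hp₂)
      hu huv hG
  · rw [← mul_sum]
    calc (v - u) / gridMesh k / 32 * _ ≤ (v - u) / gridMesh k / 32 * (2 * ((b : ℝ) ^ 2)⁻¹) := by
          gcongr
          exact sum_sigma_inv_pow_le hb _
      _ = (v - u) / gridMesh k / 16 * ((b : ℝ) ^ 2)⁻¹ := by ring

lemma card_cellsMeeting_iUnion_Hset_le (hk : 100 ≤ k) (hu : 0 ≤ u)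
    (huv : ((2 : ℝ) ^ (2 ^ k + k))⁻¹ ≤ v - u)
    (hG : ∀ A ∈ G, gridCell (gridMesh k) A ⊆ Set.Ioo u v) :
    (#(cellsMeeting (gridMesh k) G (⋃ b ∈ Ioc 1 k, Hset b k Set.univ)) : ℝ) ≤
      (v - u) / gridMesh k / 16 := by
  have hwidth : 0 ≤ v - u := le_trans (by positivity) huv
  have hmesh := gridMesh_pos k
  calc (#(cellsMeeting (gridMesh k) G (⋃ b ∈ Ioc 1 k, Hset b k Set.univ)) : ℝ)
      ≤ ∑ b ∈ Ioc 1 k, (v - u) / gridMesh k / 16 * ((b : ℝ) ^ 2)⁻¹ :=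
        card_cellsMeeting_le_sum subset_rfl fun b hb =>
          card_cellsMeeting_Hset_le hk (mem_Ioc.1 hb).1 (mem_Ioc.1 hb).2 hu huv hG
    _ ≤ (v - u) / gridMesh k / 16 * ((1 : ℕ) : ℝ)⁻¹ := by
        rw [← mul_sum]
        gcongr
        exact (sum_Ioc_inv_sq_le_sub one_ne_zero (by omega)).trans (sub_le_self _ (by positivity))
    _ = (v - u) / gridMesh k / 16 := by rw [Nat.cast_one, inv_one, mul_one]

lemma exists_gridCell_subset_Ioo_disjoint_Hset (hk : 100 ≤ k) (hu : 0 ≤ u)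
    (huv : ((2 : ℝ) ^ (2 ^ k + k))⁻¹ ≤ v - u) :
    ∃ A, gridCell (gridMesh k) A ⊆ Set.Ioo u v ∧
      ∀ b, 2 ≤ b → b ≤ k → gridCell (gridMesh k) A ∩ Hset b k Set.univ = ∅ := by
  have hmesh := gridMesh_pos k
  have hmany : 4 ≤ (v - u) / gridMesh k := by
    have htwo : 2 ≤ 2 ^ k := Nat.le_self_pow (by omega) 2
    rw [le_div_iff₀ hmesh]
    refine le_trans ?_ huv
    rw [gridMesh, ← div_eq_mul_inv, div_le_iff₀ (by positivity), inv_mul_eq_div,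
      le_div_iff₀ (by positivity)]
    calc (4 : ℝ) * 2 ^ (2 ^ k + k) = 2 ^ (2 + (2 ^ k + k)) := by rw [pow_add 2 2]; norm_num
      _ ≤ 2 ^ (2 ^ (k + 1) + k) := pow_le_pow_right₀ one_le_two (by rw [pow_succ]; omega)
  obtain ⟨G, hG, hGcard⟩ := exists_card_ge_forall_gridCell_subset_Ioo hmesh hu
    (sub_nonneg.1 (le_trans (by positivity) huv))
  have hbad := card_cellsMeeting_iUnion_Hset_le hk hu huv hG
  obtain ⟨A, hA, hAbad⟩ : ∃ A ∈ G,
      A ∉ cellsMeeting (gridMesh k) G (⋃ b ∈ Ioc 1 k, Hset b k Set.univ) := by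
    refine exists_mem_notMem_of_card_lt_card ?_
    rw [← Nat.cast_lt (α := ℝ)]
    linarith
  refine ⟨A, hG A hA, fun b hb hbk => Set.eq_empty_of_forall_notMem fun x hx => hAbad ?_⟩
  exact mem_filter.2 ⟨hA, x, hx.1, Set.mem_biUnion (mem_Ioc.2 ⟨hb, hbk⟩) hx.2⟩

end ExceptionalCells

lemma Hset_mono (b k : ℕ) {s t : Set ℝ} (hst : s ⊆ t) : Hset b k s ⊆ Hset b k t := by
  unfold Hset
  gcongr

theorem stmt15_general (k : ℕ) (hk : 100 ≤ k)
    (Ω : Set ℝ) (hΩ : Ω ⊆ Set.Ici (0 : ℝ)) (hΩ' : Ω.OrdConnected)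
    (hμ : (2⁻¹ : ENNReal) ^ (2 ^ k + k) ≤ MeasureTheory.volume Ω) :
    ∃ a : ℕ,
      Set.Ico ((a : ℝ) * ((2 : ℝ) ^ (2 ^ (k + 1) + k))⁻¹)
          (((a : ℝ) + 1) * ((2 : ℝ) ^ (2 ^ (k + 1) + k))⁻¹) ⊆ Ω ∧
      ∀ b : ℕ, 2 ≤ b → b ≤ k →
        Set.Ico ((a : ℝ) * ((2 : ℝ) ^ (2 ^ (k + 1) + k))⁻¹)
            (((a : ℝ) + 1) * ((2 : ℝ) ^ (2 ^ (k + 1) + k))⁻¹) ∩ Hset b k Ω = ∅ := by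
  have hvol : ENNReal.ofReal ((2 : ℝ) ^ (2 ^ k + k))⁻¹ ≤ MeasureTheory.volume Ω := by
    rwa [ENNReal.ofReal_inv_of_pos (by positivity), ENNReal.ofReal_pow zero_le_two,
      ENNReal.ofReal_ofNat, ENNReal.inv_pow]
  have hsub := Ioo_csInf_subset_of_le_volume hΩ' ⟨0, hΩ⟩ (by positivity) hvol
  obtain ⟨A, hAsub, hAdisj⟩ := exists_gridCell_subset_Ioo_disjoint_Hset hk
    (Real.sInf_nonneg hΩ) (add_sub_cancel_left _ _).ge
  exact ⟨A, hAsub.trans hsub, fun b hb hbk => Set.subset_eq_empty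
    (Set.inter_subset_inter_right _ (Hset_mono b k (Set.subset_univ Ω))) (hAdisj b hb hbk)⟩

theorem stmt15 (k : ℕ) (hk : 100 ≤ k)
    (Ω : Set ℝ) (hΩ : Ω ⊆ Set.Ico (0 : ℝ) 1) (hΩ' : Ω.OrdConnected)
    (hμ : (2⁻¹ : ENNReal) ^ (2 ^ k + k) ≤ MeasureTheory.volume Ω) :
    ∃ a : ℕ,
      Set.Ico ((a : ℝ) * ((2 : ℝ) ^ (2 ^ (k + 1) + k))⁻¹)
          (((a : ℝ) + 1) * ((2 : ℝ) ^ (2 ^ (k + 1) + k))⁻¹) ⊆ Ω ∧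
      ∀ b : ℕ, 2 ≤ b → b ≤ k →
        Set.Ico ((a : ℝ) * ((2 : ℝ) ^ (2 ^ (k + 1) + k))⁻¹)
            (((a : ℝ) + 1) * ((2 : ℝ) ^ (2 ^ (k + 1) + k))⁻¹) ∩ Hset b k Ω = ∅ :=
  stmt15_general k hk Ω (hΩ.trans Set.Ico_subset_Ici_self) hΩ' hμ
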